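/- Let H and G be real Hilbert spaces, let L : H → G be a nonzero bounded linear operator with adjoint L*, and let C ⊆ H and Q ⊆ G be nonempty closed convex sets. Suppose the solution set Ω := {x ∈ C | L x ∈ Q} of the split feasibility problem is nonempty. Let P_Q : G → G be the metric projection onto Q (P_Q w ∈ Q and ⟨w − P_Q w, z − P_Q w⟩ ≤ 0 for all z ∈ Q), and define B : H → H by B x := L*(L x − P_Q(L x)), which is β-cocoercive with β := 1/‖L‖². Assume the variable-metric hypotheses of the context: operators U_k, V_k with ⟨U_k x, x⟩ ≥ α‖x‖² (α > 0), V_k∘U_k = U_k∘V_k = id, ‖U_k‖ ≤ μ, (1 + η_k)⟨U_{k+1}x, x⟩ ≥ ⟨U_k x, x⟩ with η_k ≥ 0 summable; parameters γ_k ∈ (0, 2β/‖U_k‖), α_k := 2β/(4β − γ_k‖U_k‖), λ_k with λ̲ ≤ λ_k ≤ 1/α_k − τ (λ̲, τ > 0) and γ_k ≥ γ̲ > 0; errors a_k, b_k with ∑_k λ_k‖a_k‖ < ∞, ∑_k λ_k‖b_k‖ < ∞; and projection maps P_k : H → H satisfying, for every y ∈ H, P_k y ∈ C and ⟨V_k(y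 − P_k y), z − P_k y⟩ ≤ 0 for all z ∈ C. Define from x_0 ∈ H the iteration x_{k+1} = x_k + λ_k·(P_k(x_k − γ_k·U_k(L*(L x_k − P_Q(L x_k)) + b_k)) + a_k − x_k). Then there exists p ∈ Ω such that x_k converges weakly to p, i.e., ⟨x_k, y⟩ → ⟨p, y⟩ for every y ∈ H. -/

import Mathlib

open RealInnerProductSpace Filter

/-!
The iteration is an inexact forward-backward scheme for `0 ∈ A p + B p`, where `A` is the normal
cone operator of `C` and `B = L* (L - P_Q L)`. An exact step decreases the squared distance to a
zero `p`, measured in the metric `V k`: with `d = x - t` the residual of the step and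
`e = B x - B p`, monotonicity of `A` and cocoercivity of `B` combine, after completing the square,
to a decrease of `λ (τ ⟪V k d, d⟫ + γ / (2 β) ‖d - 2 β e‖²)`. As `η` and the errors are summable,
the distances to each zero converge and these decreases tend to `0`, so that `d → 0` and
`B x → B p`; closedness of the graph of `A` then makes every weak cluster point a zero.

The cluster point is unique by Opial's argument: up to factors `1 + η k` the `V k` decrease, so
they converge strongly, and polarizing the distances to two cluster points `p` and `p'` shows that
`⟪x k, V k (p - p')⟫` converges, which forces `p = p'`.
-/

section PositiveOperators

variable {H : Type*} [NormedAddCommGroup H] [InnerProductSpace ℝ H] {T : H →L[ℝ] H}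

/-- The semi-inner product `(x, y) ↦ ⟪T x, y⟫` of a positive operator `T`. -/
abbrev metricCore (hT : T.IsPositive) : PreInnerProductSpace.Core ℝ H where
  inner x y := ⟪T x, y⟫
  conj_inner_symm x y := by
    rw [conj_trivial, hT.inner_left_eq_inner_right, real_inner_comm]
  re_inner_nonneg := hT.re_inner_nonneg_left
  add_left x y z := by rw [map_add, inner_add_left]
  smul_left x y r := by rw [map_smul, real_inner_smul_left, conj_trivial]

/-- The seminorm `z ↦ √⟪T z, z⟫` of a positive operator `T`; it plays the role of the norm
`‖·‖_T` of the variable metric. -/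
noncomputable def metricSeminorm (hT : T.IsPositive) : Seminorm ℝ H :=
  letI := InnerProductSpace.Core.toNorm (c := metricCore hT)
  have core := InnerProductSpace.Core.toSeminormedSpaceCore (metricCore hT)
  Seminorm.of (fun z => √⟪T z, z⟫) core.norm_triangle core.norm_smul

theorem metricSeminorm_sq (hT : T.IsPositive) (z : H) :
    metricSeminorm hT z ^ 2 = ⟪T z, z⟫ :=
  Real.sq_sqrt (hT.inner_nonneg_left z)

theorem inner_apply_le_metricSeminorm_mul (hT : T.IsPositive) (x y : H) :
    ⟪T x, y⟫ ≤ metricSeminorm hT x * metricSeminorm hT y :=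
  (le_abs_self _).trans (InnerProductSpace.Core.norm_inner_le_norm (c := metricCore hT) x y)

theorem metricSeminorm_sub_sq (hT : T.IsPositive) (x y : H) :
    metricSeminorm hT (x - y) ^ 2 =
      metricSeminorm hT x ^ 2 - 2 * ⟪T x, y⟫ + metricSeminorm hT y ^ 2 := by
  have symm : ⟪T y, x⟫ = ⟪T x, y⟫ := by rw [hT.inner_left_eq_inner_right, real_inner_comm]
  simp only [metricSeminorm_sq, map_sub, inner_sub_left, inner_sub_right, symm]
  ring

theorem metricSeminorm_le_sqrt_mul_norm (hT : T.IsPositive) {M : ℝ} {z : H}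
    (hz : ⟪T z, z⟫ ≤ M * ‖z‖ ^ 2) : metricSeminorm hT z ≤ √M * ‖z‖ := by
  rw [← Real.sqrt_sq (norm_nonneg z), ← Real.sqrt_mul' _ (sq_nonneg _)]
  exact Real.sqrt_le_sqrt hz

theorem norm_apply_sq_le_mul_inner (hT : T.IsPositive) {M : ℝ}
    (hM : ∀ z, ⟪T z, z⟫ ≤ M * ‖z‖ ^ 2) (x : H) : ‖T x‖ ^ 2 ≤ M * ⟪T x, x⟫ := by
  have cauchy_schwarz : ‖T x‖ ^ 2 ≤ metricSeminorm hT x * (√M * ‖T x‖) := by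
    rw [← real_inner_self_eq_norm_sq]
    exact (inner_apply_le_metricSeminorm_mul hT x (T x)).trans <|
      mul_le_mul_of_nonneg_left (metricSeminorm_le_sqrt_mul_norm hT (hM _)) (apply_nonneg _ _)
  rcases eq_or_ne (T x) 0 with hx | hx
  · simp [hx]
  have hM0 : 0 ≤ M := by
    have := (hT.inner_nonneg_left (T x)).trans (hM (T x))
    exact nonneg_of_mul_nonneg_left this (by positivity)
  have norm_le : ‖T x‖ ≤ metricSeminorm hT x * √M := by
    refine le_of_mul_le_mul_right ?_ (norm_pos_iff.2 hx)
    linarith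
  calc ‖T x‖ ^ 2 ≤ (metricSeminorm hT x * √M) ^ 2 := by gcongr
    _ = M * ⟪T x, x⟫ := by rw [mul_pow, metricSeminorm_sq, Real.sq_sqrt hM0, mul_comm]

theorem isPositive_of_rightInverse {S : H →L[ℝ] H} (hT : T.IsPositive)
    (hS : T ∘L S = .id ℝ H) : S.IsPositive := by
  have hTS (z : H) : T (S z) = z := DFunLike.congr_fun hS z
  refine (ContinuousLinearMap.isPositive_iff _).2 ⟨fun y z => ?_, fun z => ?_⟩
  · calc ⟪S y, z⟫ = ⟪S y, T (S z)⟫ := by rw [hTS]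
      _ = ⟪y, S z⟫ := by rw [← hT.inner_left_eq_inner_right, hTS]
  · simpa only [hTS] using hT.inner_nonneg_right (S z)

theorem inner_rightInverse_le_mul {S S' T' : H →L[ℝ] H} {c : ℝ} (hT : T.IsPositive)
    (hS : T ∘L S = .id ℝ H) (hS' : T' ∘L S' = .id ℝ H) (hc : 0 ≤ c)
    (hle : ∀ z, ⟪T z, z⟫ ≤ c * ⟪T' z, z⟫) (z : H) : ⟪S' z, z⟫ ≤ c * ⟪S z, z⟫ := by
  have hTS : T (S z) = z := DFunLike.congr_fun hS z
  have hTS' : T' (S' z) = z := DFunLike.congr_fun hS' z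
  have sq_S : metricSeminorm hT (S z) ^ 2 = ⟪S z, z⟫ := by
    rw [metricSeminorm_sq, hTS, real_inner_comm]
  have sq_S' : metricSeminorm hT (S' z) ^ 2 ≤ c * ⟪S' z, z⟫ := by
    simpa only [metricSeminorm_sq, hTS', real_inner_comm z] using hle (S' z)
  have cauchy_schwarz : ⟪S' z, z⟫ ≤ metricSeminorm hT (S z) * metricSeminorm hT (S' z) := by
    simpa only [hTS, real_inner_comm z] using inner_apply_le_metricSeminorm_mul hT (S z) (S' z)
  rw [← sq_S]
  rcases le_or_gt ⟪S' z, z⟫ 0 with nonpos | pos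
  · exact nonpos.trans (by positivity)
  refine le_of_mul_le_mul_right ?_ pos
  calc ⟪S' z, z⟫ * ⟪S' z, z⟫
      ≤ (metricSeminorm hT (S z) * metricSeminorm hT (S' z)) ^ 2 := by
        rw [← sq]; gcongr
    _ ≤ metricSeminorm hT (S z) ^ 2 * (c * ⟪S' z, z⟫) := by
        rw [mul_pow]; gcongr
    _ = c * metricSeminorm hT (S z) ^ 2 * ⟪S' z, z⟫ := by ring

-- Consecutive differences are positive and bounded, hence controlled by their quadratic forms,
-- which converge by monotonicity.
theorem exists_tendsto_apply_of_antitone [CompleteSpace H] {W : ℕ → H →L[ℝ] H}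
    (hW : Antitone W) (hW0 : ∀ k, 0 ≤ W k) (w : H) :
    ∃ v, Tendsto (fun k => W k w) atTop (nhds v) := by
  have form_antitone (z : H) : Antitone fun k => ⟪W k z, z⟫ := fun m n hmn => by
    have := ((ContinuousLinearMap.le_def _ _).1 (hW hmn)).inner_nonneg_left z
    rwa [sub_apply, inner_sub_left, sub_nonneg] at this
  have form_nonneg (k : ℕ) (z : H) : 0 ≤ ⟪W k z, z⟫ :=
    ((ContinuousLinearMap.nonneg_iff_isPositive _).1 (hW0 k)).inner_nonneg_left z
  have form_le (k : ℕ) (z : H) : ⟪W k z, z⟫ ≤ ‖W 0‖ * ‖z‖ ^ 2 := calc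
    ⟪W k z, z⟫ ≤ ⟪W 0 z, z⟫ := form_antitone z k.zero_le
    _ ≤ ‖W 0 z‖ * ‖z‖ := real_inner_le_norm _ _
    _ ≤ ‖W 0‖ * ‖z‖ * ‖z‖ := by gcongr; exact (W 0).le_opNorm z
    _ = ‖W 0‖ * ‖z‖ ^ 2 := by ring
  set l := ⨅ k, ⟪W k w, w⟫
  have bdd : BddBelow (Set.range fun k => ⟪W k w, w⟫) :=
    ⟨0, Set.forall_mem_range.2 fun k => form_nonneg k w⟩
  have form_tendsto : Tendsto (fun k => ⟪W k w, w⟫) atTop (nhds l) :=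
    tendsto_atTop_ciInf (form_antitone w) bdd
  have dist_le (m n : ℕ) (hmn : m ≤ n) :
      dist (W m w) (W n w) ≤ √(‖W 0‖ * (⟪W m w, w⟫ - l)) := by
    have diff_le (z : H) : ⟪(W m - W n) z, z⟫ ≤ ‖W 0‖ * ‖z‖ ^ 2 := by
      rw [sub_apply, inner_sub_left]
      linarith [form_le m z, form_nonneg n z]
    have := norm_apply_sq_le_mul_inner ((ContinuousLinearMap.le_def _ _).1 (hW hmn)) diff_le w
    rw [sub_apply, inner_sub_left] at this
    rw [dist_eq_norm]
    refine Real.le_sqrt_of_sq_le (this.trans ?_)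
    gcongr
    exact ciInf_le bdd n
  refine cauchySeq_tendsto_of_complete (cauchySeq_of_le_tendsto_0' _ dist_le ?_)
  simpa using ((form_tendsto.sub_const l).const_mul ‖W 0‖).sqrt

end PositiveOperators

section RealSequences

variable {η ε s : ℕ → ℝ}

theorem one_le_prod_one_add (hη : ∀ k, 0 ≤ η k) (k : ℕ) :
    1 ≤ ∏ j ∈ Finset.range k, (1 + η j) :=
  Finset.one_le_prod fun j _ => le_add_of_nonneg_right (hη j)

theorem exists_tendsto_of_succ_le_one_add_mul (hη : ∀ k, 0 ≤ η k) (hη_sum : Summable η)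
    (hε : ∀ k, 0 ≤ ε k) (hε_sum : Summable ε) (hs : ∀ k, 0 ≤ s k)
    (hstep : ∀ k, s (k + 1) ≤ (1 + η k) * (s k + ε k)) :
    ∃ l, Tendsto s atTop (nhds l) := by
  set π : ℕ → ℝ := fun k => ∏ j ∈ Finset.range k, (1 + η j)
  have one_le (k : ℕ) : 1 ≤ π k := one_le_prod_one_add hη k
  have pos (k : ℕ) : 0 < π k := one_pos.trans_le (one_le k)
  have normalized_step (k : ℕ) : s (k + 1) / π (k + 1) ≤ s k / π k + ε k := calc
    s (k + 1) / π (k + 1) ≤ (1 + η k) * (s k + ε k) / π (k + 1) := by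
      gcongr
      · exact (pos _).le
      · exact hstep k
    _ = s k / π k + ε k / π k := by
      have := (pos k).ne'
      have : 1 + η k ≠ 0 := by linarith [hη k]
      simp only [π, Finset.prod_range_succ] at *
      field_simp
    _ ≤ s k / π k + ε k := by gcongr; exact div_le_self (hε k) (one_le k)
  let g : ℕ → ℝ := fun k => s k / π k - ∑ j ∈ Finset.range k, ε j
  have g_antitone : Antitone g := antitone_nat_of_succ_le fun k => by
    simp only [g, Finset.sum_range_succ]
    linarith [normalized_step k]
  have g_bddBelow : BddBelow (Set.range g) := by
    refine ⟨-∑' j, ε j, Set.forall_mem_range.2 fun k => ?_⟩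
    have : ∑ j ∈ Finset.range k, ε j ≤ ∑' j, ε j := hε_sum.sum_le_tsum _ fun j _ => hε j
    have : 0 ≤ s k / π k := div_nonneg (hs k) (pos k).le
    simp only [g]
    linarith
  have g_tendsto := tendsto_atTop_ciInf g_antitone g_bddBelow
  have π_tendsto := (Real.multipliable_one_add_of_summable hη_sum).hasProd.tendsto_prod_nat
  refine ⟨_, ((g_tendsto.add hε_sum.hasSum.tendsto_sum_nat).mul π_tendsto).congr fun k => ?_⟩
  simp only [g, sub_add_cancel]
  exact div_mul_cancel₀ _ (pos k).ne'

theorem exists_tendsto_and_tendsto_zero_of_succ_le {r q : ℕ → ℝ} (hη : ∀ k, 0 ≤ η k)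
    (hη_sum : Summable η) (hε : ∀ k, 0 ≤ ε k) (hε_sum : Summable ε) (hs : ∀ k, 0 ≤ s k)
    (hr : ∀ k, 0 ≤ r k) (hq : ∀ k, 0 ≤ q k) (hrs : ∀ k, r k ^ 2 ≤ s k ^ 2 - q k)
    (hstep : ∀ k, s (k + 1) ≤ (1 + η k) * (r k + ε k)) :
    (∃ l, Tendsto s atTop (nhds l)) ∧ Tendsto q atTop (nhds 0) := by
  have one_add_pos (k : ℕ) : 0 < 1 + η k := by linarith [hη k]
  have r_le (k : ℕ) : r k ≤ s k :=
    (sq_le_sq₀ (hr k) (hs k)).1 ((hrs k).trans (sub_le_self _ (hq k)))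
  obtain ⟨l, s_tendsto⟩ := exists_tendsto_of_succ_le_one_add_mul hη hη_sum hε hε_sum hs
    fun k => (hstep k).trans <|
      mul_le_mul_of_nonneg_left (add_le_add_left (r_le k) _) (one_add_pos k).le
  have le_r (k : ℕ) : s (k + 1) / (1 + η k) - ε k ≤ r k := by
    rw [sub_le_iff_le_add, div_le_iff₀' (one_add_pos k)]
    exact hstep k
  have lower_tendsto : Tendsto (fun k => s (k + 1) / (1 + η k) - ε k) atTop (nhds l) := by
    simpa using (((tendsto_add_atTop_iff_nat 1).2 s_tendsto).div
      (hη_sum.tendsto_atTop_zero.const_add 1) (by norm_num)).sub hε_sum.tendsto_atTop_zero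
  have r_tendsto : Tendsto r atTop (nhds l) :=
    tendsto_of_tendsto_of_tendsto_of_le_of_le lower_tendsto s_tendsto le_r r_le
  refine ⟨⟨l, s_tendsto⟩, squeeze_zero hq (fun k => ?_)
    (by simpa using (s_tendsto.pow 2).sub (r_tendsto.pow 2))⟩
  linarith [hrs k]

end RealSequences

section WeakConvergence

variable {H : Type*} [NormedAddCommGroup H] [InnerProductSpace ℝ H]

/-- Weak convergence along a filter in a real inner product space, tested against inner products
(in a Hilbert space every functional is of this form). -/
def WeakTendsto {ι : Type*} (x : ι → H) (F : Filter ι) (p : H) : Prop :=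
  ∀ y, Tendsto (fun k => ⟪x k, y⟫) F (nhds ⟪p, y⟫)

variable {ι : Type*} {x y : ι → H} {F : Filter ι} {p q : H} {R : ℝ}

theorem WeakTendsto.sub_tendsto (hx : WeakTendsto x F p) (hy : Tendsto y F (nhds q)) :
    WeakTendsto (fun k => x k - y k) F (p - q) := fun z => by
  simpa only [inner_sub_left] using (hx z).sub (hy.inner tendsto_const_nhds)

theorem WeakTendsto.inner_tendsto (hx : WeakTendsto x F p) (hR : ∀ k, ‖x k‖ ≤ R)
    (hy : Tendsto y F (nhds q)) : Tendsto (fun k => ⟪x k, y k⟫) F (nhds ⟪p, q⟫) := by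
  have error_tendsto : Tendsto (fun k => ⟪x k, y k - q⟫) F (nhds 0) := by
    have bound_tendsto : Tendsto (fun k => R * ‖y k - q‖) F (nhds 0) := by
      simpa using (tendsto_iff_norm_sub_tendsto_zero.1 hy).const_mul R
    refine squeeze_zero_norm (fun k => (norm_inner_le_norm _ _).trans ?_) bound_tendsto
    exact mul_le_mul_of_nonneg_right (hR k) (norm_nonneg _)
  simpa only [← inner_add_right, add_sub_cancel, add_zero] using (hx q).add error_tendsto

theorem exists_weakTendsto_ultrafilter [CompleteSpace H] (hR : ∀ k, ‖x k‖ ≤ R)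
    (g : Ultrafilter ι) : ∃ p, WeakTendsto x g p := by
  let f : ι → WeakDual ℝ H := fun k =>
    StrongDual.toWeakDual (InnerProductSpace.toDual ℝ H (x k))
  have f_mem : ∀ k, f k ∈ WeakDual.toStrongDual ⁻¹' Metric.closedBall (0 : StrongDual ℝ H) R :=
    fun k => by simp [f, hR k]
  obtain ⟨φ, -, hφ⟩ := (WeakDual.isCompact_closedBall (𝕜 := ℝ) (E := H) 0 R).ultrafilter_le_nhds
    (g.map f) (le_principal_iff.2 (mem_map.2 (univ_mem' f_mem)))
  refine ⟨(InnerProductSpace.toDual ℝ H).symm (WeakDual.toStrongDual φ), fun y => ?_⟩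
  rw [InnerProductSpace.toDual_symm_apply]
  exact ((WeakDual.eval_continuous y).tendsto φ).comp hφ

end WeakConvergence

section QuasiFejer

variable {H : Type*} [NormedAddCommGroup H] [InnerProductSpace ℝ H] {V : ℕ → H →L[ℝ] H}
  {η : ℕ → ℝ} {μ : ℝ} {x : ℕ → H} {p p' : H}

theorem exists_tendsto_apply_of_inner_succ_le [CompleteSpace H] (hV : ∀ k, (V k).IsPositive)
    (hη : ∀ k, 0 ≤ η k) (hη_sum : Summable η)
    (hmono : ∀ k z, ⟪V (k + 1) z, z⟫ ≤ (1 + η k) * ⟪V k z, z⟫) (w : H) :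
    ∃ v, Tendsto (fun k => V k w) atTop (nhds v) := by
  set π : ℕ → ℝ := fun k => ∏ j ∈ Finset.range k, (1 + η j)
  have pos (k : ℕ) : 0 < π k := one_pos.trans_le (one_le_prod_one_add hη k)
  have scaled_isPositive (k : ℕ) : ((π k)⁻¹ • V k).IsPositive :=
    (hV k).smul_of_nonneg (inv_nonneg.2 (pos k).le)
  have scaled_antitone : Antitone fun k => (π k)⁻¹ • V k := antitone_nat_of_succ_le fun k => by
    rw [ContinuousLinearMap.le_def, ContinuousLinearMap.isPositive_iff]
    refine ⟨(scaled_isPositive k).isSymmetric.sub (scaled_isPositive (k + 1)).isSymmetric,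
      fun z => ?_⟩
    have one_add_pos : 0 < 1 + η k := by linarith [hη k]
    have π_succ : (π (k + 1))⁻¹ = (π k)⁻¹ * (1 + η k)⁻¹ := by
      simp only [π, Finset.prod_range_succ, mul_inv]
    simp only [sub_apply, smul_apply, inner_sub_left, real_inner_smul_left, sub_nonneg, π_succ,
      mul_assoc]
    refine mul_le_mul_of_nonneg_left ?_ (inv_nonneg.2 (pos k).le)
    exact (inv_mul_le_iff₀ one_add_pos).2 (hmono k z)
  obtain ⟨v, hv⟩ := exists_tendsto_apply_of_antitone scaled_antitone
    (fun k => (ContinuousLinearMap.nonneg_iff_isPositive _).2 (scaled_isPositive k)) w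
  have π_tendsto := (Real.multipliable_one_add_of_summable hη_sum).hasProd.tendsto_prod_nat
  exact ⟨_, (π_tendsto.smul hv).congr fun k => smul_inv_smul₀ (pos k).ne' (V k w)⟩

theorem exists_norm_le_of_tendsto_metricSeminorm (hV : ∀ k, (V k).IsPositive)
    (hlower : ∀ k z, ‖z‖ ^ 2 ≤ μ * ⟪V k z, z⟫) {l : ℝ}
    (hl : Tendsto (fun k => metricSeminorm (hV k) (x k - p)) atTop (nhds l)) :
    ∃ R, ∀ k, ‖x k‖ ≤ R := by
  obtain ⟨M, hM⟩ := ((hl.pow 2).const_mul μ).bddAbove_range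
  refine ⟨√M + ‖p‖, fun k => (norm_le_norm_sub_add (x k) p).trans ?_⟩
  gcongr
  refine Real.le_sqrt_of_sq_le ((hlower k _).trans ?_)
  rw [← metricSeminorm_sq (hV k)]
  exact hM ⟨k, rfl⟩

theorem exists_tendsto_inner_apply_sub (hV : ∀ k, (V k).IsPositive)
    {v : H} (hv : Tendsto (fun k => V k (p - p')) atTop (nhds v)) {l l' : ℝ}
    (hl : Tendsto (fun k => metricSeminorm (hV k) (x k - p)) atTop (nhds l))
    (hl' : Tendsto (fun k => metricSeminorm (hV k) (x k - p')) atTop (nhds l')) :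
    ∃ m, Tendsto (fun k => ⟪x k, V k (p - p')⟫) atTop (nhds m) := by
  have polarization (k : ℕ) : ⟪x k, V k (p - p')⟫ =
      (metricSeminorm (hV k) (x k - p') ^ 2 - metricSeminorm (hV k) (x k - p) ^ 2
        - ⟪V k (p - p'), p - p'⟫) / 2 + ⟪V k (p - p'), p⟫ := by
    have symm : ⟪V k (x k - p), p - p'⟫ = ⟪x k - p, V k (p - p')⟫ :=
      (hV k).inner_left_eq_inner_right _ _
    have expand := metricSeminorm_sub_sq (hV k) (x k - p) (-(p - p'))
    rw [sub_neg_eq_add, sub_add_sub_cancel, inner_neg_right, symm, map_neg_eq_map,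
      metricSeminorm_sq (hV k) (p - p'), inner_sub_left, real_inner_comm _ p] at expand
    linarith
  simp only [polarization]
  exact ⟨_, ((((hl'.pow 2).sub (hl.pow 2)).sub (hv.inner tendsto_const_nhds)).div_const 2).add
    (hv.inner tendsto_const_nhds)⟩

theorem weakTendsto_ultrafilter_unique [CompleteSpace H] (hV : ∀ k, (V k).IsPositive)
    (hη : ∀ k, 0 ≤ η k) (hη_sum : Summable η)
    (hmono : ∀ k z, ⟪V (k + 1) z, z⟫ ≤ (1 + η k) * ⟪V k z, z⟫)
    (hlower : ∀ k z, ‖z‖ ^ 2 ≤ μ * ⟪V k z, z⟫) {l l' : ℝ}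
    (hl : Tendsto (fun k => metricSeminorm (hV k) (x k - p)) atTop (nhds l))
    (hl' : Tendsto (fun k => metricSeminorm (hV k) (x k - p')) atTop (nhds l'))
    {g g' : Ultrafilter ℕ} (hg : g ≤ (atTop : Filter ℕ)) (hg' : g' ≤ (atTop : Filter ℕ))
    (hp : WeakTendsto x g p) (hp' : WeakTendsto x g' p') : p = p' := by
  obtain ⟨R, hR⟩ := exists_norm_le_of_tendsto_metricSeminorm hV hlower hl
  obtain ⟨v, hv⟩ := exists_tendsto_apply_of_inner_succ_le hV hη hη_sum hmono (p - p')
  obtain ⟨m, hm⟩ := exists_tendsto_inner_apply_sub hV hv hl hl'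
  have inner_p : ⟪p, v⟫ = m :=
    tendsto_nhds_unique (hp.inner_tendsto hR (hv.mono_left hg)) (hm.mono_left hg)
  have inner_p' : ⟪p', v⟫ = m :=
    tendsto_nhds_unique (hp'.inner_tendsto hR (hv.mono_left hg')) (hm.mono_left hg')
  have orthogonal : ⟪v, p - p'⟫ = 0 := by
    rw [real_inner_comm, inner_sub_left, inner_p, inner_p', sub_self]
  have sq_le : ‖p - p'‖ ^ 2 ≤ μ * ⟪v, p - p'⟫ :=
    ge_of_tendsto ((hv.inner tendsto_const_nhds).const_mul μ)
      (Eventually.of_forall fun k => hlower k _)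
  rw [orthogonal, mul_zero] at sq_le
  exact sub_eq_zero.1 (norm_eq_zero.1 (sq_nonpos_iff _ |>.1 sq_le))

-- A variable-metric version of Opial's lemma.
theorem exists_weakTendsto_of_quasiFejer [CompleteSpace H] (hV : ∀ k, (V k).IsPositive)
    (hη : ∀ k, 0 ≤ η k) (hη_sum : Summable η)
    (hmono : ∀ k z, ⟪V (k + 1) z, z⟫ ≤ (1 + η k) * ⟪V k z, z⟫)
    (hlower : ∀ k z, ‖z‖ ^ 2 ≤ μ * ⟪V k z, z⟫) {S : Set H} (hS : S.Nonempty)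
    (hlim : ∀ p ∈ S, ∃ l, Tendsto (fun k => metricSeminorm (hV k) (x k - p)) atTop (nhds l))
    (hcluster : ∀ (g : Ultrafilter ℕ) p, g ≤ (atTop : Filter ℕ) → WeakTendsto x g p → p ∈ S) :
    ∃ p ∈ S, WeakTendsto x atTop p := by
  obtain ⟨p₀, hp₀⟩ := hS
  obtain ⟨R, hR⟩ := exists_norm_le_of_tendsto_metricSeminorm hV hlower (hlim p₀ hp₀).choose_spec
  have g₀_le : Ultrafilter.of (atTop : Filter ℕ) ≤ (atTop : Filter ℕ) := Ultrafilter.of_le _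
  obtain ⟨p, hp⟩ := exists_weakTendsto_ultrafilter hR (Ultrafilter.of atTop)
  have hpS : p ∈ S := hcluster _ p g₀_le hp
  refine ⟨p, hpS, fun y => tendsto_iff_ultrafilter .. |>.2 fun g hg => ?_⟩
  obtain ⟨p', hp'⟩ := exists_weakTendsto_ultrafilter hR g
  obtain ⟨l, hl⟩ := hlim p hpS
  obtain ⟨l', hl'⟩ := hlim p' (hcluster g p' hg hp')
  rw [weakTendsto_ultrafilter_unique hV hη hη_sum hmono hlower hl hl' g₀_le hg hp hp']
  exact hp' y

end QuasiFejer

section VariableMetric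

variable {H : Type*} [NormedAddCommGroup H] [InnerProductSpace ℝ H]

/-- A variable metric: uniformly coercive and bounded symmetric operators `U k`, with inverses
`V k`, which decrease at most by the factors `1 + η k` with `η` summable. Distances at step `k`
are measured by `√⟪V k z, z⟫`. -/
structure IsVariableMetric (α μ : ℝ) (η : ℕ → ℝ) (U V : ℕ → H →L[ℝ] H) : Prop where
  coercivity_pos : 0 < α
  isSymmetric : ∀ k, (U k : H →ₗ[ℝ] H).IsSymmetric
  coercive : ∀ k z, α * ‖z‖ ^ 2 ≤ ⟪U k z, z⟫
  comp_left : ∀ k, V k ∘L U k = .id ℝ H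
  comp_right : ∀ k, U k ∘L V k = .id ℝ H
  norm_le : ∀ k, ‖U k‖ ≤ μ
  nonneg : ∀ k, 0 ≤ η k
  summable : Summable η
  inner_le : ∀ k z, ⟪U k z, z⟫ ≤ (1 + η k) * ⟪U (k + 1) z, z⟫

namespace IsVariableMetric

variable {α μ : ℝ} {η : ℕ → ℝ} {U V : ℕ → H →L[ℝ] H}

theorem isPositive (h : IsVariableMetric α μ η U V) (k : ℕ) : (U k).IsPositive :=
  (ContinuousLinearMap.isPositive_iff _).2 ⟨h.isSymmetric k, fun z =>
    (mul_nonneg h.coercivity_pos.le (sq_nonneg _)).trans (h.coercive k z)⟩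

theorem inverse_isPositive (h : IsVariableMetric α μ η U V) (k : ℕ) : (V k).IsPositive :=
  isPositive_of_rightInverse (h.isPositive k) (h.comp_right k)

theorem inverse_inner_succ_le (h : IsVariableMetric α μ η U V) (k : ℕ) (z : H) :
    ⟪V (k + 1) z, z⟫ ≤ (1 + η k) * ⟪V k z, z⟫ :=
  inner_rightInverse_le_mul (h.isPositive k) (h.comp_right k) (h.comp_right (k + 1))
    (by linarith [h.nonneg k]) (h.inner_le k) z

theorem norm_sq_le_opNorm_mul_inner (h : IsVariableMetric α μ η U V) (k : ℕ) (z : H) :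
    ‖z‖ ^ 2 ≤ ‖U k‖ * ⟪V k z, z⟫ := by
  have form_le (w : H) : ⟪U k w, w⟫ ≤ ‖U k‖ * ⟪w, w⟫ := by
    rw [real_inner_self_eq_norm_mul_norm, ← mul_assoc]
    exact (real_inner_le_norm _ _).trans (by gcongr; exact (U k).le_opNorm w)
  simpa using inner_rightInverse_le_mul (h.isPositive k) (h.comp_right k)
    (T' := .id ℝ H) (S' := .id ℝ H) rfl (norm_nonneg _) form_le z

theorem norm_sq_le_mul_inner (h : IsVariableMetric α μ η U V) (k : ℕ) (z : H) :
    ‖z‖ ^ 2 ≤ μ * ⟪V k z, z⟫ :=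
  (h.norm_sq_le_opNorm_mul_inner k z).trans <|
    mul_le_mul_of_nonneg_right (h.norm_le k) ((h.inverse_isPositive k).inner_nonneg_left z)

theorem inverse_inner_le (h : IsVariableMetric α μ η U V) (k : ℕ) (z : H) :
    ⟪V k z, z⟫ ≤ α⁻¹ * ‖z‖ ^ 2 := by
  have form_le (w : H) : ⟪w, w⟫ ≤ α⁻¹ * ⟪U k w, w⟫ := by
    rw [real_inner_self_eq_norm_sq, le_inv_mul_iff₀ h.coercivity_pos]
    exact h.coercive k w
  simpa using inner_rightInverse_le_mul (T := .id ℝ H) (S := .id ℝ H)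
    ContinuousLinearMap.isPositive_id rfl (h.comp_right k)
    (inv_nonneg.2 h.coercivity_pos.le) form_le z

theorem norm_inverse_apply_sq_le (h : IsVariableMetric α μ η U V) (k : ℕ) (z : H) :
    ‖V k z‖ ^ 2 ≤ α⁻¹ * ⟪V k z, z⟫ :=
  norm_apply_sq_le_mul_inner (h.inverse_isPositive k) (h.inverse_inner_le k) z

theorem inverse_inner_pos (h : IsVariableMetric α μ η U V) (k : ℕ) {z : H} (hz : z ≠ 0) :
    0 < ⟪V k z, z⟫ := by
  refine pos_of_mul_pos_right ?_ (norm_nonneg (U k))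
  exact (by positivity : 0 < ‖z‖ ^ 2).trans_le (h.norm_sq_le_opNorm_mul_inner k z)

/-- The norm `‖·‖_{V k}` measuring distances at step `k`. -/
noncomputable def seminorm (h : IsVariableMetric α μ η U V) (k : ℕ) : Seminorm ℝ H :=
  metricSeminorm (h.inverse_isPositive k)

theorem seminorm_le_sqrt_mul_norm (h : IsVariableMetric α μ η U V) (k : ℕ) (z : H) :
    h.seminorm k z ≤ √α⁻¹ * ‖z‖ :=
  metricSeminorm_le_sqrt_mul_norm _ (h.inverse_inner_le k z)

theorem seminorm_succ_le (h : IsVariableMetric α μ η U V) (k : ℕ) (z : H) :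
    h.seminorm (k + 1) z ≤ (1 + η k) * h.seminorm k z := by
  have one_le : 1 ≤ 1 + η k := le_add_of_nonneg_right (h.nonneg k)
  have nonneg : 0 ≤ ⟪V k z, z⟫ := (h.inverse_isPositive k).inner_nonneg_left z
  refine (sq_le_sq₀ (apply_nonneg _ _) (by positivity)).1 ?_
  simp only [seminorm, mul_pow, metricSeminorm_sq]
  calc ⟪V (k + 1) z, z⟫ ≤ (1 + η k) * ⟪V k z, z⟫ := h.inverse_inner_succ_le k z
    _ ≤ (1 + η k) ^ 2 * ⟪V k z, z⟫ := by gcongr; exact le_self_pow₀ one_le two_ne_zero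

end IsVariableMetric

end VariableMetric

section MonotoneOperators

variable {H : Type*} [NormedAddCommGroup H] [InnerProductSpace ℝ H]

/-- Monotonicity of a set-valued operator `A`. -/
def IsMonotoneOperator (A : H → Set H) : Prop :=
  ∀ ⦃x y u v⦄, u ∈ A x → v ∈ A y → 0 ≤ ⟪u - v, x - y⟫

/-- Maximal monotonicity of a set-valued operator `A`; maximality of the graph is encoded by the
condition that every pair monotonically related to the graph belongs to it. -/
structure IsMaximallyMonotone (A : H → Set H) : Prop where
  monotone : IsMonotoneOperator A
  mem_of_related : ∀ ⦃x u⦄, (∀ ⦃y v⦄, v ∈ A y → 0 ≤ ⟪u - v, x - y⟫) → u ∈ A x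

/-- Cocoercivity of a single-valued operator `B`, the assumption on the forward step. -/
def IsCocoercive (β : ℝ) (B : H → H) : Prop :=
  ∀ x y, β * ‖B x - B y‖ ^ 2 ≤ ⟪B x - B y, x - y⟫

variable {A : H → Set H} {B : H → H} {β γ : ℝ}

theorem IsMonotoneOperator.metricSeminorm_resolvent_sub_le (hA : IsMonotoneOperator A)
    {T : H →L[ℝ] H} (hT : T.IsPositive) (hγ : 0 < γ) {y y' t t' : H}
    (ht : γ⁻¹ • T (y - t) ∈ A t) (ht' : γ⁻¹ • T (y' - t') ∈ A t') :
    metricSeminorm hT (t - t') ≤ metricSeminorm hT (y - y') := by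
  have monotone : 0 ≤ ⟪T (y - y') - T (t - t'), t - t'⟫ := by
    have := hA ht ht'
    rw [← smul_sub, real_inner_smul_left, ← map_sub] at this
    rw [← map_sub, sub_sub_sub_comm]
    exact nonneg_of_mul_nonneg_right this (inv_pos.2 hγ)
  have sq_le : metricSeminorm hT (t - t') ^ 2 ≤
      metricSeminorm hT (y - y') * metricSeminorm hT (t - t') := by
    rw [inner_sub_left, ← metricSeminorm_sq hT, sub_nonneg] at monotone
    exact monotone.trans (inner_apply_le_metricSeminorm_mul hT _ _)
  rcases (apply_nonneg (metricSeminorm hT) (t - t')).eq_or_lt with zero | pos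
  · exact zero ▸ apply_nonneg _ _
  · exact le_of_mul_le_mul_right (by rwa [← sq]) pos

-- Minty's argument: the resolvent at `p + γ U u` returns `p` itself.
theorem IsMonotoneOperator.isMaximallyMonotone_of_resolvent (hA : IsMonotoneOperator A)
    {U V : H →L[ℝ] H} (hV : ∀ z ≠ 0, 0 < ⟪V z, z⟫) (hVU : V ∘L U = .id ℝ H) (hγ : 0 < γ)
    {J : H → H} (hJ : ∀ y, γ⁻¹ • V (y - J y) ∈ A (J y)) : IsMaximallyMonotone A := by
  refine ⟨hA, fun p u hpu => ?_⟩
  set q := J (p + γ • U u)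
  have hq : γ⁻¹ • V (p - q) + u ∈ A q := by
    convert hJ (p + γ • U u) using 1
    have hVUu : V (U u) = u := DFunLike.congr_fun hVU u
    rw [add_sub_right_comm, map_add, map_smul, hVUu, smul_add, inv_smul_smul₀ hγ.ne']
  have related := hpu hq
  rw [sub_add_cancel_right, inner_neg_left, real_inner_smul_left, neg_nonneg] at related
  have hpq : p - q = 0 := by
    by_contra hne
    exact (mul_pos (inv_pos.2 hγ) (hV _ hne)).not_ge related
  rwa [hpq, map_zero, smul_zero, zero_add, ← sub_eq_zero.1 hpq] at hq

variable {ι : Type*} {F : Filter ι} [F.NeBot] {R : ℝ}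

theorem IsMaximallyMonotone.mem_of_weakTendsto (hA : IsMaximallyMonotone A) {t u : ι → H}
    {p w : H} (hmem : ∀ k, u k ∈ A (t k)) (ht : WeakTendsto t F p) (hR : ∀ k, ‖t k‖ ≤ R)
    (hu : Tendsto u F (nhds w)) : w ∈ A p := by
  refine hA.mem_of_related fun q v hv => ?_
  have limit := (ht.sub_tendsto (tendsto_const_nhds (x := q))).inner_tendsto
    (R := R + ‖q‖) (fun k => (norm_sub_le _ _).trans (by gcongr; exact hR k))
    (hu.sub_const v)
  rw [real_inner_comm]
  exact ge_of_tendsto' limit fun k => by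
    rw [real_inner_comm]
    exact hA.monotone (hmem k) hv

theorem IsCocoercive.apply_eq_of_weakTendsto (hB : IsCocoercive β B) (hβ : 0 < β) {x : ι → H}
    {p w : H} (hx : WeakTendsto x F p) (hR : ∀ k, ‖x k‖ ≤ R)
    (hBx : Tendsto (fun k => B (x k)) F (nhds w)) : B p = w := by
  have inner_tendsto := (hx.sub_tendsto (tendsto_const_nhds (x := p))).inner_tendsto
    (R := R + ‖p‖) (fun k => (norm_sub_le _ _).trans (by gcongr; exact hR k))
    (hBx.sub_const (B p))
  have limit : β * ‖w - B p‖ ^ 2 ≤ ⟪p - p, w - B p⟫ :=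
    le_of_tendsto_of_tendsto' (((hBx.sub_const (B p)).norm.pow 2).const_mul β) inner_tendsto
      fun k => by simpa only [real_inner_comm] using hB (x k) p
  rw [sub_self, inner_zero_left] at limit
  have := sq_nonpos_iff _ |>.1 (nonpos_of_mul_nonpos_right limit hβ)
  exact (sub_eq_zero.1 (norm_eq_zero.1 this)).symm

end MonotoneOperators

section ForwardBackwardStep

variable {H : Type*} [NormedAddCommGroup H] [InnerProductSpace ℝ H] {A : H → Set H} {B : H → H}
  {β γ : ℝ} {T : H →L[ℝ] H} {x t p : H}

theorem IsMonotoneOperator.le_inner_apply_sub (hA : IsMonotoneOperator A)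
    (hB : IsCocoercive β B) (hγ : 0 < γ) (ht : γ⁻¹ • T (x - t) - B x ∈ A t)
    (hp : -B p ∈ A p) :
    ⟪T (x - t), x - t⟫ + γ * (β * ‖B x - B p‖ ^ 2 - ⟪B x - B p, x - t⟫) ≤
      ⟪T (x - t), x - p⟫ := by
  have monotone := mul_nonneg hγ.le (hA ht hp)
  have regroup : γ⁻¹ • T (x - t) - B x - -B p = γ⁻¹ • (T (x - t) - γ • (B x - B p)) := by
    rw [smul_sub, inv_smul_smul₀ hγ.ne']
    abel
  rw [regroup, real_inner_smul_left, mul_inv_cancel_left₀ hγ.ne',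
    ← sub_sub_sub_cancel_left p t x, inner_sub_right, inner_sub_left, inner_sub_left,
    real_inner_smul_left, real_inner_smul_left] at monotone
  have cocoercive := mul_le_mul_of_nonneg_left (hB x p) hγ.le
  linarith

theorem IsMonotoneOperator.metricSeminorm_relaxed_sub_sq_le (hA : IsMonotoneOperator A)
    (hB : IsCocoercive β B) (hβ : 0 < β) (hT : T.IsPositive) (hγ : 0 < γ)
    (ht : γ⁻¹ • T (x - t) - B x ∈ A t) (hp : -B p ∈ A p) {ρ lam τ : ℝ}
    (hρ : ‖x - t‖ ^ 2 ≤ ρ * ⟪T (x - t), x - t⟫) (hlam : 0 ≤ lam)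
    (hlam_le : lam ≤ 2 - γ * ρ / (2 * β) - τ) :
    metricSeminorm hT (x + lam • (t - x) - p) ^ 2 ≤ metricSeminorm hT (x - p) ^ 2 -
      lam * (τ * ⟪T (x - t), x - t⟫ +
        γ / (2 * β) * ‖x - t - (2 * β) • (B x - B p)‖ ^ 2) := by
  set d := x - t
  set e := B x - B p
  have expand : metricSeminorm hT (x + lam • (t - x) - p) ^ 2 =
      metricSeminorm hT (x - p) ^ 2 - 2 * lam * ⟪T d, x - p⟫ + lam ^ 2 * ⟪T d, d⟫ := by
    have split : x + lam • (t - x) - p = x - p - lam • d := by simp only [d, smul_sub]; abel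
    have symm : ⟪T (x - p), d⟫ = ⟪T d, x - p⟫ := by
      rw [hT.inner_left_eq_inner_right, real_inner_comm]
    rw [split, metricSeminorm_sub_sq, metricSeminorm_sq hT (lam • d), real_inner_smul_right, symm]
    simp only [map_smul, real_inner_smul_left, real_inner_smul_right]
    ring
  have square : γ / (2 * β) * ‖d - (2 * β) • e‖ ^ 2 =
      γ / (2 * β) * ‖d‖ ^ 2 + 2 * γ * (β * ‖e‖ ^ 2 - ⟪e, d⟫) := by
    rw [norm_sub_sq_real, real_inner_smul_right, norm_smul, mul_pow, Real.norm_eq_abs, sq_abs,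
      real_inner_comm]
    field_simp
    ring
  have step_bound : γ / (2 * β) * ‖d‖ ^ 2 + τ * ⟪T d, d⟫ ≤ (2 - lam) * ⟪T d, d⟫ := by
    have hρ' := mul_le_mul_of_nonneg_left hρ (by positivity : 0 ≤ γ / (2 * β))
    have hlam' := mul_le_mul_of_nonneg_right hlam_le (hT.inner_nonneg_left d)
    linear_combination hρ' + hlam'
  have fejer := hA.le_inner_apply_sub hB hγ ht hp
  have := mul_le_mul_of_nonneg_left step_bound hlam
  have := mul_le_mul_of_nonneg_left fejer hlam
  rw [expand, square]
  linarith

theorem seminorm_relaxed_add_sub_le (N : Seminorm ℝ H) {x t t' a p : H} {lam : ℝ}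
    (hlam : 0 ≤ lam) :
    N (x + lam • (t' + a - x) - p) ≤
      N (x + lam • (t - x) - p) + lam * (N (t' - t) + N a) := by
  have split : x + lam • (t' + a - x) - p =
      (x + lam • (t - x) - p) + lam • (t' - t + a) := by module
  rw [split]
  refine (map_add_le_add N _ _).trans (add_le_add_right ?_ _)
  rw [map_smul_eq_mul, Real.norm_of_nonneg hlam]
  gcongr
  exact map_add_le_add N _ _

end ForwardBackwardStep

section ForwardBackwardScheme

/-- The relaxed inexact forward-backward iteration `x` for `0 ∈ A p + B p` in the variable metric
`U`, with step sizes `γ`, relaxation parameters `lam`, errors `a` and `b`, and resolvents `J`.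
The property `resolvent` says `J k = (id + γ k • U k A)⁻¹`, which for monotone `A` is
single-valued. -/
structure ForwardBackwardScheme (H : Type*) [NormedAddCommGroup H] [InnerProductSpace ℝ H] where
  A : H → Set H
  B : H → H
  (β α μ lamlb τ γlb : ℝ)
  (η γ lam : ℕ → ℝ)
  (U V : ℕ → H →L[ℝ] H)
  J : ℕ → H → H
  (a b x : ℕ → H)
  metric : IsVariableMetric α μ η U V
  monotone : IsMonotoneOperator A
  cocoercive : IsCocoercive β B
  β_pos : 0 < β
  lamlb_pos : 0 < lamlb
  τ_pos : 0 < τ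
  γlb_pos : 0 < γlb
  lamlb_le : ∀ k, lamlb ≤ lam k
  lam_le : ∀ k, lam k ≤ 2 - γ k * ‖U k‖ / (2 * β) - τ
  γlb_le : ∀ k, γlb ≤ γ k
  summable_a : Summable fun k => lam k * ‖a k‖
  summable_b : Summable fun k => lam k * ‖b k‖
  resolvent : ∀ k y, (γ k)⁻¹ • V k (y - J k y) ∈ A (J k y)
  x_succ : ∀ k, x (k + 1) = x k + lam k • (J k (x k - γ k • U k (B (x k) + b k)) + a k - x k)

namespace ForwardBackwardScheme

variable {H : Type*} [NormedAddCommGroup H] [InnerProductSpace ℝ H]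
  (S : ForwardBackwardScheme H) {p : H}

/-- The exact forward-backward step from `x k`. -/
def exactStep (k : ℕ) : H := S.J k (S.x k - S.γ k • S.U k (S.B (S.x k)))

/-- A summable bound for the influence of the errors `a k` and `b k` on the `k`-th distance. -/
noncomputable def errorBound (k : ℕ) : ℝ :=
  √S.α⁻¹ * (4 * S.β * (S.lam k * ‖S.b k‖) + S.lam k * ‖S.a k‖)

/-- A lower bound for the decrease of the squared distance to a zero `p` in an exact step. -/
noncomputable def decrease (p : H) (k : ℕ) : ℝ :=
  S.lamlb * (S.τ * ⟪S.V k (S.x k - S.exactStep k), S.x k - S.exactStep k⟫ +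
    S.γlb / (2 * S.β) * ‖S.x k - S.exactStep k - (2 * S.β) • (S.B (S.x k) - S.B p)‖ ^ 2)

theorem γ_pos (k : ℕ) : 0 < S.γ k := S.γlb_pos.trans_le (S.γlb_le k)

theorem lam_pos (k : ℕ) : 0 < S.lam k := S.lamlb_pos.trans_le (S.lamlb_le k)

theorem γ_mul_opNorm_le (k : ℕ) : S.γ k * ‖S.U k‖ ≤ 4 * S.β := by
  have : S.γ k * ‖S.U k‖ / (2 * S.β) ≤ 2 := by linarith [S.lam_le k, S.lam_pos k, S.τ_pos]
  rw [div_le_iff₀ (mul_pos two_pos S.β_pos)] at this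
  linarith

theorem inverse_form_nonneg (k : ℕ) (z : H) : 0 ≤ ⟪S.V k z, z⟫ :=
  (S.metric.inverse_isPositive k).inner_nonneg_left z

theorem decrease_nonneg (p : H) (k : ℕ) : 0 ≤ S.decrease p k := by
  have := S.inverse_form_nonneg k (S.x k - S.exactStep k)
  have := S.lamlb_pos.le
  have := S.τ_pos.le
  have := S.γlb_pos.le
  have := S.β_pos.le
  unfold decrease
  positivity

theorem errorBound_nonneg (k : ℕ) : 0 ≤ S.errorBound k := by
  have := (S.lam_pos k).le
  have := S.β_pos.le
  unfold errorBound
  positivity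

theorem summable_errorBound : Summable S.errorBound :=
  ((S.summable_b.mul_left _).add S.summable_a).mul_left _

theorem exactStep_mem (k : ℕ) :
    (S.γ k)⁻¹ • S.V k (S.x k - S.exactStep k) - S.B (S.x k) ∈ S.A (S.exactStep k) := by
  have hVU : S.V k (S.U k (S.B (S.x k))) = S.B (S.x k) :=
    DFunLike.congr_fun (S.metric.comp_left k) _
  have mem := S.resolvent k (S.x k - S.γ k • S.U k (S.B (S.x k)))
  rwa [sub_right_comm, map_sub, map_smul, hVU, smul_sub, inv_smul_smul₀ (S.γ_pos k).ne'] at mem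

theorem isMaximallyMonotone : IsMaximallyMonotone S.A :=
  S.monotone.isMaximallyMonotone_of_resolvent (fun _ hz => S.metric.inverse_inner_pos 0 hz)
    (S.metric.comp_left 0) (S.γ_pos 0) (S.resolvent 0)

theorem seminorm_exact_sub_sq_le (hp : -S.B p ∈ S.A p) (k : ℕ) :
    S.metric.seminorm k (S.x k + S.lam k • (S.exactStep k - S.x k) - p) ^ 2 ≤
      S.metric.seminorm k (S.x k - p) ^ 2 - S.decrease p k := by
  have := S.inverse_form_nonneg k (S.x k - S.exactStep k)
  have := S.τ_pos.le
  have := S.γlb_pos.le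
  have := S.β_pos.le
  have := (S.lam_pos k).le
  refine (S.monotone.metricSeminorm_relaxed_sub_sq_le S.cocoercive S.β_pos
    (S.metric.inverse_isPositive k) (S.γ_pos k) (S.exactStep_mem k) hp
    (S.metric.norm_sq_le_opNorm_mul_inner k _) (S.lam_pos k).le (S.lam_le k)).trans ?_
  unfold decrease IsVariableMetric.seminorm
  gcongr
  exacts [S.lamlb_le k, S.γlb_le k]

theorem seminorm_error_le (k : ℕ) :
    S.lam k * (S.metric.seminorm k
      (S.J k (S.x k - S.γ k • S.U k (S.B (S.x k) + S.b k)) - S.exactStep k) +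
        S.metric.seminorm k (S.a k)) ≤ S.errorBound k := by
  have nonexpansive : S.metric.seminorm k
      (S.J k (S.x k - S.γ k • S.U k (S.B (S.x k) + S.b k)) - S.exactStep k) ≤
        S.metric.seminorm k (S.γ k • S.U k (S.b k)) := by
    refine (S.monotone.metricSeminorm_resolvent_sub_le (S.metric.inverse_isPositive k)
      (S.γ_pos k) (S.resolvent k _) (S.resolvent k _)).trans_eq ?_
    rw [sub_sub_sub_cancel_left, ← smul_sub, ← map_sub, sub_add_cancel_left, map_neg, smul_neg,
      map_neg_eq_map]
    rfl
  have norm_le : ‖S.γ k • S.U k (S.b k)‖ ≤ 4 * S.β * ‖S.b k‖ := calc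
    ‖S.γ k • S.U k (S.b k)‖ = S.γ k * ‖S.U k (S.b k)‖ := by
      rw [norm_smul, Real.norm_of_nonneg (S.γ_pos k).le]
    _ ≤ S.γ k * (‖S.U k‖ * ‖S.b k‖) := by
      have := (S.γ_pos k).le
      gcongr
      exact (S.U k).le_opNorm _
    _ ≤ 4 * S.β * ‖S.b k‖ := by
      rw [← mul_assoc]
      exact mul_le_mul_of_nonneg_right (S.γ_mul_opNorm_le k) (norm_nonneg _)
  have := (S.lam_pos k).le
  calc _ ≤ S.lam k * (√S.α⁻¹ * (4 * S.β * ‖S.b k‖) + √S.α⁻¹ * ‖S.a k‖) := by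
        gcongr
        · exact (nonexpansive.trans (S.metric.seminorm_le_sqrt_mul_norm k _)).trans (by gcongr)
        · exact S.metric.seminorm_le_sqrt_mul_norm k _
    _ = S.errorBound k := by unfold errorBound; ring

theorem seminorm_succ_sub_le (p : H) (k : ℕ) :
    S.metric.seminorm (k + 1) (S.x (k + 1) - p) ≤ (1 + S.η k) *
      (S.metric.seminorm k (S.x k + S.lam k • (S.exactStep k - S.x k) - p) + S.errorBound k) := by
  have one_add_nonneg : 0 ≤ 1 + S.η k := add_nonneg zero_le_one (S.metric.nonneg k)
  refine (S.metric.seminorm_succ_le k _).trans (mul_le_mul_of_nonneg_left ?_ one_add_nonneg)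
  rw [S.x_succ]
  exact (seminorm_relaxed_add_sub_le _ (S.lam_pos k).le).trans
    (add_le_add_right (S.seminorm_error_le k) _)

theorem exists_tendsto_seminorm_and_decrease (hp : -S.B p ∈ S.A p) :
    (∃ l, Tendsto (fun k => S.metric.seminorm k (S.x k - p)) atTop (nhds l)) ∧
      Tendsto (S.decrease p) atTop (nhds 0) :=
  exists_tendsto_and_tendsto_zero_of_succ_le S.metric.nonneg S.metric.summable
    S.errorBound_nonneg S.summable_errorBound (fun _ => apply_nonneg _ _)
    (fun _ => apply_nonneg _ _) (S.decrease_nonneg p) (S.seminorm_exact_sub_sq_le hp)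
    (S.seminorm_succ_sub_le p)

theorem tendsto_inverse_form_residual (hp : -S.B p ∈ S.A p) :
    Tendsto (fun k => ⟪S.V k (S.x k - S.exactStep k), S.x k - S.exactStep k⟫) atTop
      (nhds 0) := by
  have scale_pos : 0 < S.lamlb * S.τ := mul_pos S.lamlb_pos S.τ_pos
  have := S.lamlb_pos.le
  have := S.γlb_pos.le
  have := S.β_pos.le
  refine squeeze_zero (fun k => S.inverse_form_nonneg k _) (fun k => ?_)
    (by simpa only [mul_zero] using
      (S.exists_tendsto_seminorm_and_decrease hp).2.const_mul (S.lamlb * S.τ)⁻¹)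
  rw [le_inv_mul_iff₀ scale_pos, mul_assoc]
  unfold decrease
  gcongr
  exact le_add_of_nonneg_right (by positivity)

theorem tendsto_residual (hp : -S.B p ∈ S.A p) :
    Tendsto (fun k => S.x k - S.exactStep k) atTop (nhds 0) := by
  refine squeeze_zero_norm (fun k => Real.le_sqrt_of_sq_le (S.metric.norm_sq_le_mul_inner k _)) ?_
  simpa using ((S.tendsto_inverse_form_residual hp).const_mul S.μ).sqrt

theorem tendsto_inverse_residual (hp : -S.B p ∈ S.A p) :
    Tendsto (fun k => (S.γ k)⁻¹ • S.V k (S.x k - S.exactStep k)) atTop (nhds 0) := by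
  have inverse_tendsto : Tendsto (fun k => S.V k (S.x k - S.exactStep k)) atTop (nhds 0) := by
    refine squeeze_zero_norm
      (fun k => Real.le_sqrt_of_sq_le (S.metric.norm_inverse_apply_sq_le k _)) ?_
    simpa using ((S.tendsto_inverse_form_residual hp).const_mul S.α⁻¹).sqrt
  refine squeeze_zero_norm (fun k => ?_)
    (by simpa only [norm_zero, mul_zero] using inverse_tendsto.norm.const_mul S.γlb⁻¹)
  rw [norm_smul, norm_inv, Real.norm_of_nonneg (S.γ_pos k).le]
  have := S.γlb_pos
  gcongr
  exact S.γlb_le k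

theorem tendsto_forward (hp : -S.B p ∈ S.A p) :
    Tendsto (fun k => S.B (S.x k)) atTop (nhds (S.B p)) := by
  have scale_pos : 0 < S.lamlb * (S.γlb / (2 * S.β)) :=
    mul_pos S.lamlb_pos (div_pos S.γlb_pos (mul_pos two_pos S.β_pos))
  have two_β_ne_zero : 2 * S.β ≠ 0 := (mul_pos two_pos S.β_pos).ne'
  have square_le (k : ℕ) : ‖S.x k - S.exactStep k - (2 * S.β) • (S.B (S.x k) - S.B p)‖ ^ 2 ≤
      (S.lamlb * (S.γlb / (2 * S.β)))⁻¹ * S.decrease p k := by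
    have := S.lamlb_pos.le
    rw [le_inv_mul_iff₀ scale_pos, mul_assoc]
    unfold decrease
    gcongr
    exact le_add_of_nonneg_left (mul_nonneg S.τ_pos.le (S.inverse_form_nonneg k _))
  have difference_tendsto : Tendsto
      (fun k => S.x k - S.exactStep k - (2 * S.β) • (S.B (S.x k) - S.B p)) atTop (nhds 0) := by
    refine squeeze_zero_norm (fun k => Real.le_sqrt_of_sq_le (square_le k)) ?_
    simpa using ((S.exists_tendsto_seminorm_and_decrease hp).2.const_mul
      (S.lamlb * (S.γlb / (2 * S.β)))⁻¹).sqrt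
  refine tendsto_sub_nhds_zero_iff.1 ?_
  simpa only [sub_sub_cancel, inv_smul_smul₀ two_β_ne_zero, sub_zero, smul_zero] using
    ((S.tendsto_residual hp).sub difference_tendsto).const_smul (2 * S.β)⁻¹

theorem exists_norm_le (hp : -S.B p ∈ S.A p) : ∃ R, ∀ k, ‖S.x k‖ ≤ R :=
  exists_norm_le_of_tendsto_metricSeminorm S.metric.inverse_isPositive
    S.metric.norm_sq_le_mul_inner (S.exists_tendsto_seminorm_and_decrease hp).1.choose_spec

theorem exists_norm_exactStep_le (hp : -S.B p ∈ S.A p) : ∃ R, ∀ k, ‖S.exactStep k‖ ≤ R := by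
  obtain ⟨R, hR⟩ := S.exists_norm_le hp
  obtain ⟨R', hR'⟩ := (S.tendsto_residual hp).norm.bddAbove_range
  refine ⟨R + R', fun k => ?_⟩
  rw [← sub_sub_cancel (S.x k) (S.exactStep k)]
  exact (norm_sub_le _ _).trans (add_le_add (hR k) (hR' ⟨k, rfl⟩))

theorem neg_forward_mem_of_weakTendsto (hp : -S.B p ∈ S.A p) {F : Filter ℕ} [F.NeBot]
    (hF : F ≤ atTop) {q : H} (hq : WeakTendsto S.x F q) : -S.B q ∈ S.A q := by
  obtain ⟨R, hR⟩ := S.exists_norm_le hp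
  obtain ⟨R', hR'⟩ := S.exists_norm_exactStep_le hp
  have forward_tendsto := (S.tendsto_forward hp).mono_left hF
  have exactStep_tendsto : WeakTendsto S.exactStep F q := by
    simpa using hq.sub_tendsto ((S.tendsto_residual hp).mono_left hF)
  have hBq : S.B q = S.B p := S.cocoercive.apply_eq_of_weakTendsto S.β_pos hq hR forward_tendsto
  refine S.isMaximallyMonotone.mem_of_weakTendsto S.exactStep_mem exactStep_tendsto hR' ?_
  simpa [hBq] using ((S.tendsto_inverse_residual hp).mono_left hF).sub forward_tendsto

theorem exists_weakTendsto [CompleteSpace H] (hp : -S.B p ∈ S.A p) :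
    ∃ q, -S.B q ∈ S.A q ∧ WeakTendsto S.x atTop q :=
  exists_weakTendsto_of_quasiFejer (S := {q | -S.B q ∈ S.A q}) S.metric.inverse_isPositive
    S.metric.nonneg S.metric.summable S.metric.inverse_inner_succ_le S.metric.norm_sq_le_mul_inner
    ⟨p, hp⟩ (fun _ hq => (S.exists_tendsto_seminorm_and_decrease hq).1)
    fun _ _ hg hq => S.neg_forward_mem_of_weakTendsto hp hg hq

end ForwardBackwardScheme

end ForwardBackwardScheme

section SplitFeasibility

variable {H : Type*} [NormedAddCommGroup H] [InnerProductSpace ℝ H]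
  {G : Type*} [NormedAddCommGroup G] [InnerProductSpace ℝ G]

/-- The normal cone operator of `C`, empty outside `C`; its resolvent in a metric is the projection
onto `C` in that metric. -/
def normalCone (C : Set H) (x : H) : Set H := {u | x ∈ C ∧ ∀ z ∈ C, ⟪u, z - x⟫ ≤ 0}

theorem isMonotoneOperator_normalCone (C : Set H) : IsMonotoneOperator (normalCone C) := by
  rintro x y u v ⟨hx, hu⟩ ⟨hy, hv⟩
  have hu := hu y hy
  have hv := hv x hx
  rw [← neg_sub x y, inner_neg_right] at hu
  rw [inner_sub_left]
  linarith

variable {Q : Set G} {PQ : G → G}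

theorem norm_residual_sub_sq_le_inner (hPQmem : ∀ w, PQ w ∈ Q)
    (hPQproj : ∀ w, ∀ z ∈ Q, ⟪w - PQ w, z - PQ w⟫ ≤ 0) (v w : G) :
    ‖(v - PQ v) - (w - PQ w)‖ ^ 2 ≤ ⟪(v - PQ v) - (w - PQ w), v - w⟫ := by
  have hv := hPQproj v _ (hPQmem w)
  have hw := hPQproj w _ (hPQmem v)
  have split : v - w = ((v - PQ v) - (w - PQ w)) - (PQ w - PQ v) := by abel
  rw [← neg_sub (PQ w) (PQ v), inner_neg_right] at hw
  rw [split, inner_sub_right _ _ (PQ w - PQ v), inner_sub_left _ _ (PQ w - PQ v),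
    real_inner_self_eq_norm_sq]
  linarith

variable [CompleteSpace H] [CompleteSpace G] {L : H →L[ℝ] G}

theorem isCocoercive_adjoint_residual (hL : L ≠ 0) (hPQmem : ∀ w, PQ w ∈ Q)
    (hPQproj : ∀ w, ∀ z ∈ Q, ⟪w - PQ w, z - PQ w⟫ ≤ 0) :
    IsCocoercive (1 / ‖L‖ ^ 2) fun x => L.adjoint (L x - PQ (L x)) := fun x y => by
  have : 0 < ‖L‖ := norm_pos_iff.2 hL
  set e := (L x - PQ (L x)) - (L y - PQ (L y)) with he
  have adjoint_le : ‖L.adjoint e‖ ≤ ‖L‖ * ‖e‖ := by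
    simpa only [LinearIsometryEquiv.norm_map] using L.adjoint.le_opNorm e
  rw [← map_sub L.adjoint, ContinuousLinearMap.adjoint_inner_left, map_sub L, ← he]
  calc 1 / ‖L‖ ^ 2 * ‖L.adjoint e‖ ^ 2 ≤ 1 / ‖L‖ ^ 2 * (‖L‖ * ‖e‖) ^ 2 := by gcongr
    _ = ‖e‖ ^ 2 := by field_simp
    _ ≤ ⟪e, L x - L y⟫ := norm_residual_sub_sq_le_inner hPQmem hPQproj _ _

theorem neg_adjoint_residual_mem_normalCone_iff {C : Set H} (hPQmem : ∀ w, PQ w ∈ Q)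
    (hPQproj : ∀ w, ∀ z ∈ Q, ⟪w - PQ w, z - PQ w⟫ ≤ 0) (hΩ : ∃ z ∈ C, L z ∈ Q) {p : H} :
    -L.adjoint (L p - PQ (L p)) ∈ normalCone C p ↔ p ∈ C ∧ L p ∈ Q := by
  constructor
  · rintro ⟨hp, normal⟩
    obtain ⟨z, hzC, hzQ⟩ := hΩ
    have hz := normal z hzC
    rw [inner_neg_left, ContinuousLinearMap.adjoint_inner_left, map_sub,
      ← sub_sub_sub_cancel_right (L z) (L p) (PQ (L p)), inner_sub_right,
      real_inner_self_eq_norm_sq] at hz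
    have := sq_nonpos_iff _ |>.1 (by linarith [hPQproj (L p) _ hzQ] : ‖L p - PQ (L p)‖ ^ 2 ≤ 0)
    exact ⟨hp, sub_eq_zero.1 (norm_eq_zero.1 this) ▸ hPQmem (L p)⟩
  · rintro ⟨hp, hLp⟩
    have residual_eq_zero : L p - PQ (L p) = 0 :=
      real_inner_self_nonpos.1 (hPQproj (L p) _ hLp)
    simp [normalCone, residual_eq_zero, hp]

end SplitFeasibility

theorem variable_metric_split_feasibility_weak_convergence_general
    {H : Type*} [NormedAddCommGroup H] [InnerProductSpace ℝ H] [CompleteSpace H]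
    {G : Type*} [NormedAddCommGroup G] [InnerProductSpace ℝ G] [CompleteSpace G]
    {L : H →L[ℝ] G} (hL : L ≠ 0) {C : Set H} {Q : Set G} (hΩ : ∃ z ∈ C, L z ∈ Q)
    {PQ : G → G} (hPQmem : ∀ w, PQ w ∈ Q)
    (hPQproj : ∀ w, ∀ z ∈ Q, ⟪w - PQ w, z - PQ w⟫ ≤ 0)
    {α μ : ℝ} {η : ℕ → ℝ} {U V : ℕ → H →L[ℝ] H} (metric : IsVariableMetric α μ η U V)
    {β : ℝ} (hβ : β = 1 / ‖L‖ ^ 2) {γ lam : ℕ → ℝ} {lamlb τ γlb : ℝ}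
    (hlamlb : 0 < lamlb) (hτ : 0 < τ) (hγlb : 0 < γlb) (hlam : ∀ k, lamlb ≤ lam k)
    (hlam_le : ∀ k, lam k ≤ 2 - γ k * ‖U k‖ / (2 * β) - τ) (hγ : ∀ k, γlb ≤ γ k)
    {a b : ℕ → H} (ha : Summable fun k => lam k * ‖a k‖) (hb : Summable fun k => lam k * ‖b k‖)
    {P : ℕ → H → H} (hPmem : ∀ k y, P k y ∈ C)
    (hPproj : ∀ k y, ∀ z ∈ C, ⟪V k (y - P k y), z - P k y⟫ ≤ 0) {x : ℕ → H}
    (hx : ∀ k, x (k + 1) = x k + lam k •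
      (P k (x k - γ k • U k (L.adjoint (L (x k) - PQ (L (x k))) + b k)) + a k - x k)) :
    ∃ p, (p ∈ C ∧ L p ∈ Q) ∧ WeakTendsto x atTop p := by
  have zero_iff {p : H} := neg_adjoint_residual_mem_normalCone_iff hPQmem hPQproj hΩ (p := p)
  let S : ForwardBackwardScheme H :=
    { A := normalCone C
      B := fun z => L.adjoint (L z - PQ (L z))
      J := P
      α, μ, η, U, V, metric, β, γ, lam, lamlb, τ, γlb, a, b, x
      monotone := isMonotoneOperator_normalCone C
      cocoercive := hβ ▸ isCocoercive_adjoint_residual hL hPQmem hPQproj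
      β_pos := hβ ▸ one_div_pos.2 (pow_pos (norm_pos_iff.2 hL) 2)
      lamlb_pos := hlamlb
      τ_pos := hτ
      γlb_pos := hγlb
      lamlb_le := hlam
      lam_le := hlam_le
      γlb_le := hγ
      summable_a := ha
      summable_b := hb
      resolvent := fun k y => ⟨hPmem k y, fun z hz => by
        rw [real_inner_smul_left]
        exact mul_nonpos_of_nonneg_of_nonpos
          (inv_nonneg.2 (hγlb.le.trans (hγ k))) (hPproj k y z hz)⟩
      x_succ := hx }
  obtain ⟨p₀, hp₀⟩ := hΩ
  obtain ⟨p, hp, hxp⟩ := S.exists_weakTendsto (zero_iff.2 hp₀)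
  exact ⟨p, zero_iff.1 hp, hxp⟩

/-- weak convergence of the variable metric CQ-type algorithm for the
split feasibility problem. -/
theorem variable_metric_split_feasibility_weak_convergence
    {H : Type*} [NormedAddCommGroup H] [InnerProductSpace ℝ H] [CompleteSpace H]
    {G : Type*} [NormedAddCommGroup G] [InnerProductSpace ℝ G] [CompleteSpace G]
    (L : H →L[ℝ] G) (hL : L ≠ 0)
    (C : Set H) (hCne : C.Nonempty) (hCclosed : IsClosed C) (hCconv : Convex ℝ C)
    (Q : Set G) (hQne : Q.Nonempty) (hQclosed : IsClosed Q) (hQconv : Convex ℝ Q)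
    (hΩ : {z : H | z ∈ C ∧ L z ∈ Q}.Nonempty)
    (PQ : G → G)
    (hPQmem : ∀ w : G, PQ w ∈ Q)
    (hPQproj : ∀ w : G, ∀ z ∈ Q, ⟪w - PQ w, z - PQ w⟫ ≤ 0)
    (B : H → H)
    (hBdef : ∀ z : H, B z = (ContinuousLinearMap.adjoint L) (L z - PQ (L z)))
    (β : ℝ) (hβ : β = 1 / ‖L‖ ^ 2)
    (α : ℝ) (hα : 0 < α) (μ : ℝ) (hμ : 0 < μ)
    (U V : ℕ → H →L[ℝ] H)
    (hU : ∀ k, IsSelfAdjoint (U k))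
    (hUpos : ∀ k, ∀ z : H, ⟪U k z, z⟫ ≥ α * ‖z‖ ^ 2)
    (hV : ∀ k, IsSelfAdjoint (V k))
    (hVU : ∀ k, (V k).comp (U k) = ContinuousLinearMap.id ℝ H)
    (hUV : ∀ k, (U k).comp (V k) = ContinuousLinearMap.id ℝ H)
    (hUnorm : ∀ k, ‖U k‖ ≤ μ)
    (η : ℕ → ℝ) (hη0 : ∀ k, 0 ≤ η k) (hηsum : Summable η)
    (hUmono : ∀ k, ∀ z : H, (1 + η k) * ⟪U (k + 1) z, z⟫ ≥ ⟪U k z, z⟫)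
    (γ lam αk : ℕ → ℝ)
    (hγ : ∀ k, 0 < γ k ∧ γ k < 2 * β / ‖U k‖)
    (hαk : ∀ k, αk k = 2 * β / (4 * β - γ k * ‖U k‖))
    (lamlb τ γlb : ℝ) (hlamlb : 0 < lamlb) (hτ : 0 < τ) (hγlb : 0 < γlb)
    (hlam : ∀ k, lamlb ≤ lam k ∧ lam k ≤ 1 / αk k - τ)
    (hγ' : ∀ k, γlb ≤ γ k)
    (a b : ℕ → H)
    (ha : Summable (fun k => lam k * ‖a k‖))
    (hb : Summable (fun k => lam k * ‖b k‖))
    (P : ℕ → H → H)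
    (hPmem : ∀ k, ∀ y : H, P k y ∈ C)
    (hPproj : ∀ k, ∀ y : H, ∀ z ∈ C, ⟪V k (y - P k y), z - P k y⟫ ≤ 0)
    (x : ℕ → H)
    (hx : ∀ k, x (k + 1) =
      x k + lam k • (P k (x k - γ k • U k (B (x k) + b k)) + a k - x k)) :
    ∃ p ∈ {z : H | z ∈ C ∧ L z ∈ Q},
      ∀ y : H, Tendsto (fun k => ⟪x k, y⟫) atTop (nhds ⟪p, y⟫) := by
  obtain rfl : B = _ := funext hBdef
  have inv_αk (k : ℕ) : 1 / αk k = 2 - γ k * ‖U k‖ / (2 * β) := by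
    have : β ≠ 0 := hβ ▸ (one_div_pos.2 (pow_pos (norm_pos_iff.2 hL) 2)).ne'
    rw [hαk, one_div_div]
    field_simp
    ring
  exact variable_metric_split_feasibility_weak_convergence_general hL hΩ hPQmem hPQproj
    ⟨hα, fun k => (hU k).isSymmetric, hUpos, hVU, hUV, hUnorm, hη0, hηsum, hUmono⟩ hβ hlamlb hτ
    hγlb (fun k => (hlam k).1) (fun k => inv_αk k ▸ (hlam k).2) hγ' ha hb hPmem hPproj hx
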